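/- Assume char(F) = 3. Then every word a ∈ M with a ≠ 0 in A_{3,d} satisfies deg(a) ≤ 2d + 7; equivalently, every word of length greater than 2d + 7 in the letters x_1,…,x_d, x_1^T,…,x_d^T is zero in A_{3,d}. -/

import Mathlib

open FreeAlgebra MulOpposite

/-- The alphabet: `(k, false)` is the letter `x_{k+1}`, `(k, true)` is `x_{k+1}ᵀ`. -/
abbrev Ltr (d : ℕ) := Fin d × Bool

/-- The free (unital) associative algebra on the `2d` letters.  The free non-unital
algebra `M_F` sits inside it as the span of the nonempty words. -/
abbrev FA (F : Type) [Field F] (d : ℕ) := FreeAlgebra F (Ltr d)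

variable (F : Type) [Field F] (d : ℕ)

/-- The word in the free algebra corresponding to a list of letters
(the empty list gives `1`, the unit). -/
def wordOf (l : List (Ltr d)) : FA F d := (l.map (FreeAlgebra.ι F)).prod

/-- The transpose: the linear anti-automorphism with `x ↦ xᵀ`, `xᵀ ↦ x`. -/
def tp (a : FA F d) : FA F d :=
  ((FreeAlgebra.lift F fun p : Ltr d => op (FreeAlgebra.ι F (p.1, !p.2))) a).unop

/-- `ā = a - aᵀ`. -/
def bar (a : FA F d) : FA F d := a - tp F d a

/-- `T(a,b,c) = a b̄ c̄ + b̄ aᵀ c̄ + b̄ c̄ a`. -/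
def Trel (a b c : FA F d) : FA F d :=
  a * bar F d b * bar F d c + bar F d b * tp F d a * bar F d c + bar F d b * bar F d c * a

/-- The copy of the free non-unital algebra `M_F`, i.e. the span of the nonempty words. -/
def MFsub : Submodule F (FA F d) :=
  Submodule.span F {w | ∃ l : List (Ltr d), l ≠ [] ∧ w = wordOf F d l}

/-- The two-sided ideal such that `A_{3,d} = M_F / (idealA ∩ M_F)`: it is generated by
`a³` for `a ∈ M_F` together with `T(a,b,c)` for `a, b, c ∈ M_F`.  (Since all generators lie in
`M_F`, its intersection with `M_F` is exactly the two-sided ideal of the non-unital algebra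
`M_F` generated by these elements; in fact it is contained in `M_F`.)
An element `u ∈ M_F` is zero in `A_{3,d}` iff `u ∈ idealA F d`. -/
def idealA : TwoSidedIdeal (FA F d) :=
  TwoSidedIdeal.span
    ({x | ∃ a ∈ MFsub F d, x = a ^ 3} ∪
     {x | ∃ a ∈ MFsub F d, ∃ b ∈ MFsub F d, ∃ c ∈ MFsub F d, x = Trel F d a b c})


theorem perm_inv {α M : Type} (m : ℕ) (f : List α → M)
    (hs : ∀ l1 p q l2, m ≤ l1.length + l2.length + 2 → f (l1 ++ p :: q :: l2) = f (l1 ++ q :: p :: l2))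
    {l l' : List α} (h : l.Perm l') : ∀ l1 : List α, m ≤ l1.length + l.length → f (l1 ++ l) = f (l1 ++ l') := by
  induction h with
  | nil => intros; rfl
  | cons x h ih =>
    intro l1 hm
    have := ih (l1 ++ [x]) (by simp at hm ⊢; omega)
    simpa using this
  | swap x y l => intro l1 hm; exact hs _ _ _ _ (by simp at hm; omega)
  | trans h1 h2 ih1 ih2 =>
    intro l1 hm
    rw [ih1 l1 hm, ih2 l1 (by rw [← h1.length_eq]; exact hm)]

theorem sort_cube {d : ℕ} {M : Type} [Zero M] (m : ℕ) (f : List (Fin d) → M)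
    (hs : ∀ l1 p q l2, m ≤ l1.length + l2.length + 2 → f (l1 ++ p :: q :: l2) = f (l1 ++ q :: p :: l2))
    (hc : ∀ p l, f (p :: p :: p :: l) = 0)
    (l : List (Fin d)) (h1 : m ≤ l.length) (h2 : 2 * d + 1 ≤ l.length) : f l = 0 := by
  have hex : ∃ i, 3 ≤ l.count i := by
    by_contra! hcon
    have h3 : l.length = ∑ i : Fin d, l.count i := by
      have := Multiset.sum_count_eq_card (s := (Finset.univ : Finset (Fin d))) (m := (l : Multiset (Fin d))) (by simp)
      simpa using this.symm
    have h4 : ∑ i : Fin d, l.count i ≤ ∑ i : Fin d, 2 := Finset.sum_le_sum (fun i _ => by have := hcon i; omega)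
    simp at h4
    omega
  obtain ⟨i, hi⟩ := hex
  have hsub := List.replicate_sublist_iff.mpr hi
  obtain ⟨t, ht⟩ := hsub.exists_perm_append
  have := perm_inv m f hs ht [] (by simpa using h1)
  simp only [List.nil_append] at this
  rw [this]
  exact hc i t

structure Sys (R : Type) [Ring R] (d : ℕ) where
  Rel : R → R → Prop
  y : Fin d → R
  h3 : (3 : R) = 0
  add : ∀ {a a' b b'}, Rel a a' → Rel b b' → Rel (a + b) (a' + b')
  neg : ∀ {a a'}, Rel a a' → Rel (-a) (-a')
  mul : ∀ {a a' b b'}, Rel a a' → Rel b b' → Rel (a * b) (b' * a')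
  sym : ∀ {a a'}, Rel a a' → Rel a' a
  hy : ∀ i, Rel (y i) (y i)
  cube : ∀ {a a'}, Rel a a' → a * a * a = 0
  T : ∀ {a a' b c}, Rel a a' → Rel b (-b) → Rel c (-c) → a * b * c + b * a' * c + b * c * a = 0

namespace Sys
variable {R : Type} [Ring R] {d : ℕ} (X : Sys R d)

def S (a : R) : Prop := X.Rel a (-a)
def W (u : List (Fin d)) : R := (u.map X.y).prod

@[simp] theorem W_nil : X.W [] = 1 := rfl
@[simp] theorem W_cons (p u) : X.W (p :: u) = X.y p * X.W u := by simp [W]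
@[simp] theorem W_append (u v) : X.W (u ++ v) = X.W u * X.W v := by simp [W]

theorem relW (u : List (Fin d)) (hu : u ≠ []) : X.Rel (X.W u) (X.W u.reverse) := by
  induction u with
  | nil => simp at hu
  | cons p u ih =>
    by_cases h : u = []
    · subst h; simpa using X.hy p
    · have := X.mul (X.hy p) (ih h)
      simpa using this

theorem three (X : Sys R d) (x : R) : x + x + x = 0 := by
  have : x + x + x = 3 * x := by noncomm_ring
  rw [this, X.h3, zero_mul]

theorem TW (u : List (Fin d)) {b c : R} (hb : X.S b) (hc : X.S c) :
    X.W u * b * c + b * X.W u.reverse * c + b * c * X.W u = 0 := by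
  by_cases h : u = []
  · subst h; simpa using X.three (b * c)
  · exact X.T (X.relW u h) hb hc

theorem TW' (u : List (Fin d)) {b c : R} (hb : X.S b) (hc : X.S c) :
    b * X.W u * c = - (X.W u.reverse * b * c) - b * c * X.W u.reverse := by
  have := X.TW u.reverse hb hc
  rw [List.reverse_reverse] at this
  linear_combination (norm := noncomm_ring) this

theorem rev {a b c : R} (ha : X.S a) (hb : X.S b) (hc : X.S c) : c * b * a = - (a * b * c) := by
  have h1 := X.T ha hc hb
  have h2 := X.T hc ha hb
  linear_combination (norm := noncomm_ring) h1 + h2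

theorem four {a b c e : R} (ha : X.S a) (hb : X.S b) (hc : X.S c) (he : X.S e) : a * b * c * e = 0 := by
  have h1 := X.T (X.mul ha hb) hc he
  have h2 := X.rev ha hb hc
  have h3 := X.rev ha he hc
  have h4 := X.rev hb hc he
  linear_combination (norm := noncomm_ring) h1 - h2 * e - h3 * b + a * h4

theorem comm3 (x : List (Fin d)) {a b c : R} (ha : X.S a) (hb : X.S b) (hc : X.S c) :
    a * b * c * X.W x = X.W x.reverse * a * b * c := by
  have h1 := X.TW x.reverse ha hb
  have h2 := X.TW x hb hc
  rw [List.reverse_reverse] at h1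
  linear_combination (norm := noncomm_ring) a * h2 - h1 * c

theorem Spq (p q : Fin d) : X.S (X.y p * X.y q - X.y q * X.y p) := by
  have := X.add (X.mul (X.hy p) (X.hy q)) (X.neg (X.mul (X.hy q) (X.hy p)))
  unfold S
  convert this using 1 <;> noncomm_ring

theorem Spa (p : Fin d) {a : R} (ha : X.S a) : X.S (X.y p * a + a * X.y p) := by
  have := X.add (X.mul (X.hy p) ha) (X.mul ha (X.hy p))
  unfold S
  convert this using 1; noncomm_ring

theorem Sneg {a : R} (ha : X.S a) : X.S (-a) := X.neg ha

theorem comm3p (p q : Fin d) {a b c : R} (ha : X.S a) (hb : X.S b) (hc : X.S c) :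
    a * X.y p * b * c * X.y q = X.y q * (a * X.y p * b * c) := by
  have h1 := X.comm3 [q] (X.Spa p ha) hb hc
  have h2 := X.comm3 [q] ha hb hc
  have h3 := X.four (X.Spq q p) ha hb hc
  simp at h1 h2
  linear_combination (norm := noncomm_ring) h1 - X.y p * h2 + h3

theorem Z4 (v w z : List (Fin d)) {a b c e : R} (ha : X.S a) (hb : X.S b) (hc : X.S c) (he : X.S e) :
    a * X.W v * b * X.W w * c * X.W z * e = 0 := by
  have h4 := X.four ha hb hc he
  have x3 : ∀ v, a * b * c * X.W v * e = 0 := by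
    intro v
    have h1 := X.TW' v.reverse ha hb
    have h2 := X.TW' v hb hc
    have h3 := X.TW' v.reverse hc he
    rw [List.reverse_reverse] at h1 h3
    have h5 := X.comm3 v ha hb hc
    rw [h5]
    linear_combination (norm := noncomm_ring) X.W v.reverse * h4
  have x1 : ∀ v, a * X.W v * b * c * e = 0 := by
    intro v
    have h5 := X.comm3 v.reverse hb hc he
    rw [List.reverse_reverse] at h5
    linear_combination (norm := noncomm_ring) h4 * X.W v.reverse - a * h5
  have x2 : ∀ v, a * b * X.W v * c * e = 0 := by
    intro v
    linear_combination (norm := noncomm_ring) a * X.TW' v hb hc * e - x1 v.reverse - x3 v.reverse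
  have x23 : ∀ v w, a * b * X.W v * c * X.W w * e = 0 := by
    intro v w
    have h := x2 (v ++ w.reverse)
    rw [W_append] at h
    linear_combination (norm := noncomm_ring) a * b * X.W v * X.TW' w hc he - h - x2 v * X.W w.reverse
  have x13 : ∀ v w, a * X.W v * b * c * X.W w * e = 0 := by
    intro v w
    linear_combination (norm := noncomm_ring) X.TW' v ha hb * c * X.W w * e - X.W v.reverse * x3 w - x23 v.reverse w
  have x12 : ∀ v w, a * X.W v * b * X.W w * c * e = 0 := by
    intro v w
    have h := x1 (v ++ w.reverse)
    rw [W_append] at h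
    linear_combination (norm := noncomm_ring) a * X.W v * X.TW' w hb hc * e - h - x13 v w.reverse
  have h := x23 (v.reverse ++ w) z
  rw [W_append] at h
  linear_combination (norm := noncomm_ring) X.TW' v ha hb * X.W w * c * X.W z * e - X.W v.reverse * x23 w z - h

theorem cubeL {p q e e' : R} {p' q' : R} (hp : X.Rel p p') (hq : X.Rel q q') (he : X.Rel e e') :
    p * q * e + q * p * e + p * e * q + q * e * p + e * p * q + e * q * p = 0 := by
  have h1 := X.cube hp
  have h2 := X.cube hq
  have h3 := X.cube he
  have h12 := X.cube (X.add hp hq)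
  have h13 := X.cube (X.add hp he)
  have h23 := X.cube (X.add hq he)
  have h := X.cube (X.add (X.add hp hq) he)
  linear_combination (norm := noncomm_ring) h - h12 - h13 - h23 + h1 + h2 + h3

theorem y3 (p : Fin d) : X.y p * X.y p * X.y p = 0 := X.cube (X.hy p)


theorem Wswap (l1 : List (Fin d)) (p q : Fin d) (l2 : List (Fin d)) :
    X.W (l1 ++ p :: q :: l2) = X.W (l1 ++ q :: p :: l2) +
      X.W l1 * (X.y p * X.y q - X.y q * X.y p) * X.W l2 := by
  simp only [W_append, W_cons]; noncomm_ring

theorem kill (m : ℕ) (e : R)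
    (h : ∀ l1 p q l2, m ≤ l1.length + l2.length + 2 →
      X.W l1 * (X.y p * X.y q - X.y q * X.y p) * X.W l2 * e = 0)
    (u : List (Fin d)) (h1 : m ≤ u.length) (h2 : 2 * d + 1 ≤ u.length) : X.W u * e = 0 := by
  refine sort_cube m (fun u => X.W u * e) ?_ ?_ u h1 h2
  · intro l1 p q l2 hl
    simp only [X.Wswap l1 p q l2, add_mul, h l1 p q l2 hl, add_zero]
  · intro p l
    simp only [W_cons]
    linear_combination (norm := noncomm_ring) X.y3 p * X.W l * e

theorem Z3b (v : List (Fin d)) (hv : v.length ≤ 1) {a b c : R} (ha : X.S a) (hb : X.S b) (hc : X.S c)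
    (x u : List (Fin d)) (h : 2 * d + 1 ≤ u.length + x.length) :
    X.W u * (a * X.W v * b * c) * X.W x = 0 := by
  induction x generalizing u with
  | nil =>
    rw [W_nil, mul_one]
    refine X.kill 0 _ ?_ u (by omega) (by simpa using h)
    intro l1 p q l2 _
    have := X.Z4 l2 v [] (X.Spq p q) ha hb hc
    simp only [W_nil] at this
    linear_combination (norm := noncomm_ring) X.W l1 * this
  | cons q x ih =>
    have h1 := ih (u ++ [q]) (by simp at h ⊢; omega)
    have h2 : a * X.W v * b * c * X.y q = X.y q * (a * X.W v * b * c) := by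
      match v, hv with
      | [], _ => have := X.comm3 [q] ha hb hc; simp at this ⊢; rw [this]; noncomm_ring
      | [p], _ => simpa using X.comm3p p q ha hb hc
    simp only [W_append, W_cons, W_nil] at h1 ⊢
    linear_combination (norm := noncomm_ring) h1 + X.W u * h2 * X.W x

/-- moving two letters across `e` -/
theorem move (p q : Fin d) {e e' g : R} (he : X.Rel e e') {u : R}
    (h1 : u * (X.y p * X.y q - X.y q * X.y p) * e * g = 0)
    (h2 : u * e * (X.y p * X.y q - X.y q * X.y p) * g = 0) :
    u * e * X.y p * X.y q * g = - (u * X.y p * X.y q * e * g) + u * X.y p * e * X.y q * g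
      + u * X.y q * e * X.y p * g := by
  have h3 := X.cubeL (X.hy p) (X.hy q) he
  have h4 := X.three (u * e * X.y p * X.y q * g)
  have h5 := X.three (u * X.y p * X.y q * e * g)
  linear_combination (norm := noncomm_ring) h4 + h5 - u * h3 * g - h1 - h2

theorem Z3a {a b c : R} (ha : X.S a) (hb : X.S b) (hc : X.S c) (n : ℕ) :
    ∀ (v u x : List (Fin d)), v.length ≤ n → 2 * d + 2 ≤ u.length + v.length + x.length →
    X.W u * a * X.W v * b * c * X.W x = 0 := by
  induction n with
  | zero =>
    intro v u x hv h
    linear_combination (norm := noncomm_ring) X.Z3b v (by omega) ha hb hc x u (by omega)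
  | succ n ih =>
    intro v u x hv h
    match v, hv, h with
    | [], hv, h =>
      linear_combination (norm := noncomm_ring) X.Z3b [] (by simp) ha hb hc x u (by simp at h ⊢; omega)
    | [p], hv, h =>
      linear_combination (norm := noncomm_ring) X.Z3b [p] (by simp) ha hb hc x u (by simp at h ⊢; omega)
    | p :: q :: v, hv, h =>
      simp only [List.length_cons] at hv h
      have z1 := X.Z4 [] v [] (X.Spq p q) ha hb hc
      have z2 := X.Z4 [] v [] ha (X.Spq p q) hb hc
      simp only [W_nil] at z1 z2
      have hm := X.move p q ha (u := X.W u) (g := X.W v * b * c * X.W x)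
        (by linear_combination (norm := noncomm_ring) X.W u * z1 * X.W x)
        (by linear_combination (norm := noncomm_ring) X.W u * z2 * X.W x)
      have i1 := ih v (u ++ [p, q]) x (by omega) (by simp; omega)
      have i2 := ih (q :: v) (u ++ [p]) x (by simp; omega) (by simp; omega)
      have i3 := ih (p :: v) (u ++ [q]) x (by simp; omega) (by simp; omega)
      simp only [W_append, W_cons, W_nil] at i1 i2 i3 ⊢
      linear_combination (norm := noncomm_ring) hm - i1 + i2 + i3

theorem Z3 {a b c : R} (ha : X.S a) (hb : X.S b) (hc : X.S c)
    (u v w x : List (Fin d)) (h : 2 * d + 2 ≤ u.length + v.length + w.length + x.length) :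
    X.W u * a * X.W v * b * X.W w * c * X.W x = 0 := by
  have h1 := X.Z3a ha hb hc _ (v ++ w.reverse) u x le_rfl (by simp; omega)
  have h2 := X.Z3a ha hb hc _ v u (w.reverse ++ x) le_rfl (by simp; omega)
  simp only [W_append] at h1 h2
  linear_combination (norm := noncomm_ring) X.W u * a * X.W v * X.TW' w hb hc * X.W x - h1 - h2

theorem outer {e e' : R} (he : X.Rel e e') (m : ℕ) (hm : 2 * d + 2 ≤ m)
    (hl : ∀ (l1 : List (Fin d)) p q l2 x, m ≤ l1.length + l2.length + 2 + x.length →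
      X.W l1 * (X.y p * X.y q - X.y q * X.y p) * X.W l2 * e * X.W x = 0)
    (hr : ∀ (u : List (Fin d)) p q x, m ≤ u.length + 2 + x.length →
      X.W u * e * (X.y p * X.y q - X.y q * X.y p) * X.W x = 0) (n : ℕ) :
    ∀ (x u : List (Fin d)), x.length ≤ n → m ≤ u.length + x.length →
    X.W u * e * X.W x = 0 := by
  have base : ∀ (x u : List (Fin d)), x.length ≤ 1 → m ≤ u.length + x.length →
      X.W u * e * X.W x = 0 := by
    intro x u hx h
    rw [mul_assoc]
    refine X.kill (m - x.length) _ ?_ u (by omega) (by omega)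
    intro l1 p q l2 h'
    rw [← mul_assoc]
    exact hl l1 p q l2 x (by omega)
  induction n with
  | zero => intro x u hx h; exact base x u (by omega) h
  | succ n ih =>
    intro x u hx h
    match x, hx, h with
    | [], hx, h => exact base _ u (by simp) h
    | [p], hx, h => exact base _ u (by simp) h
    | p :: q :: x, hx, h =>
      simp only [List.length_cons] at hx h
      have z1 := hl u p q [] x (by simp; omega)
      have z2 := hr u p q x (by omega)
      rw [W_nil, mul_one] at z1
      have hm := X.move p q he (u := X.W u) z1 z2
      have i1 := ih x (u ++ [p, q]) (by omega) (by simp; omega)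
      have i2 := ih (q :: x) (u ++ [p]) (by simp; omega) (by simp; omega)
      have i3 := ih (p :: x) (u ++ [q]) (by simp; omega) (by simp; omega)
      simp only [W_append, W_cons, W_nil] at i1 i2 i3 ⊢
      linear_combination (norm := noncomm_ring) hm - i1 + i2 + i3

theorem Z2a {a b : R} (ha : X.S a) (hb : X.S b)
    (u x : List (Fin d)) (h : 2 * d + 4 ≤ u.length + x.length) :
    X.W u * a * b * X.W x = 0 := by
  rw [mul_assoc (X.W u)]
  refine X.outer (X.mul ha hb) (2 * d + 4) (by omega) ?_ ?_ _ x u le_rfl h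
  · intro l1 p q l2 x h
    have := X.Z3 (X.Spq p q) ha hb l1 l2 [] x (by simp; omega)
    rw [W_nil] at this
    linear_combination (norm := noncomm_ring) this
  · intro u p q x h
    have := X.Z3 ha hb (X.Spq p q) u [] [] x (by simp; omega)
    rw [W_nil] at this
    linear_combination (norm := noncomm_ring) this

theorem Z2 {a b : R} (ha : X.S a) (hb : X.S b)
    (u v x : List (Fin d)) (h : 2 * d + 4 ≤ u.length + v.length + x.length) :
    X.W u * a * X.W v * b * X.W x = 0 := by
  have h1 := X.Z2a ha hb (u ++ v.reverse) x (by simp; omega)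
  have h2 := X.Z2a ha hb u (v.reverse ++ x) (by simp; omega)
  simp only [W_append] at h1 h2
  linear_combination (norm := noncomm_ring) X.W u * X.TW' v ha hb * X.W x - h1 - h2

theorem Z1 {a : R} (ha : X.S a)
    (u x : List (Fin d)) (h : 2 * d + 6 ≤ u.length + x.length) :
    X.W u * a * X.W x = 0 := by
  refine X.outer ha (2 * d + 6) (by omega) ?_ ?_ _ x u le_rfl h
  · intro l1 p q l2 x h
    exact X.Z2 (X.Spq p q) ha l1 l2 x (by omega)
  · intro u p q x h
    have := X.Z2 ha (X.Spq p q) u [] x (by simp; omega)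
    rw [W_nil] at this
    linear_combination (norm := noncomm_ring) this

theorem Z0 (u : List (Fin d)) (h : 2 * d + 8 ≤ u.length) : X.W u = 0 := by
  rw [← mul_one (X.W u)]
  refine X.kill (2 * d + 8) _ ?_ u h (by omega)
  intro l1 p q l2 h
  rw [mul_one]
  exact X.Z1 (X.Spq p q) l1 l2 (by omega)

theorem G4 {a b c e : R} (ha : X.S a) (hb : X.S b) (hc : X.S c) (he : X.S e)
    (u v w x : List (Fin d)) (r : R) :
    X.W u * a * X.W v * b * X.W w * c * X.W x * e * r = 0 := by
  linear_combination (norm := noncomm_ring) X.W u * X.Z4 v w x ha hb hc he * r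

theorem G3 {α : Type} (g : α → R) (k : α → Fin d) (z : α → R)
    (hz : ∀ s, X.S (z s)) (hg : ∀ s, g s = X.y (k s) + z s) {a b c : R} (ha : X.S a) (hb : X.S b) (hc : X.S c) (l : List α) :
    ∀ (u v w x : List (Fin d)), 2 * d + 2 ≤ u.length + v.length + w.length + x.length + l.length →
    X.W u * a * X.W v * b * X.W w * c * X.W x * (l.map g).prod = 0 := by
  induction l with
  | nil => intro u v w x h; simpa using X.Z3 ha hb hc u v w x (by simpa using h)
  | cons s l ih =>
    intro u v w x h
    have h1 := ih u v w (x ++ [k s]) (by simp at h ⊢; omega)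
    have h2 := X.G4 ha hb hc (hz s) u v w x (l.map g).prod
    simp only [W_append, W_cons, W_nil, List.map_cons, List.prod_cons, hg s] at h1 ⊢
    linear_combination (norm := noncomm_ring) h1 + h2

theorem G2 {α : Type} (g : α → R) (k : α → Fin d) (z : α → R)
    (hz : ∀ s, X.S (z s)) (hg : ∀ s, g s = X.y (k s) + z s) {a b : R} (ha : X.S a) (hb : X.S b) (l : List α) :
    ∀ (u v x : List (Fin d)), 2 * d + 4 ≤ u.length + v.length + x.length + l.length →
    X.W u * a * X.W v * b * X.W x * (l.map g).prod = 0 := by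
  induction l with
  | nil => intro u v x h; simpa using X.Z2 ha hb u v x (by simpa using h)
  | cons s l ih =>
    intro u v x h
    have h1 := ih u v (x ++ [k s]) (by simp at h ⊢; omega)
    have h2 := X.G3 g k z hz hg ha hb (hz s) l u v x [] (by simp at h ⊢; omega)
    simp only [W_append, W_cons, W_nil, List.map_cons, List.prod_cons, hg s] at h1 h2 ⊢
    linear_combination (norm := noncomm_ring) h1 + h2

theorem G1 {α : Type} (g : α → R) (k : α → Fin d) (z : α → R)
    (hz : ∀ s, X.S (z s)) (hg : ∀ s, g s = X.y (k s) + z s) {a : R} (ha : X.S a) (l : List α) :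
    ∀ (u x : List (Fin d)), 2 * d + 6 ≤ u.length + x.length + l.length →
    X.W u * a * X.W x * (l.map g).prod = 0 := by
  induction l with
  | nil => intro u x h; simpa using X.Z1 ha u x (by simpa using h)
  | cons s l ih =>
    intro u x h
    have h1 := ih u (x ++ [k s]) (by simp at h ⊢; omega)
    have h2 := X.G2 g k z hz hg ha (hz s) l u x [] (by simp at h ⊢; omega)
    simp only [W_append, W_cons, W_nil, List.map_cons, List.prod_cons, hg s] at h1 h2 ⊢
    linear_combination (norm := noncomm_ring) h1 + h2

theorem G0 {α : Type} (g : α → R) (k : α → Fin d) (z : α → R)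
    (hz : ∀ s, X.S (z s)) (hg : ∀ s, g s = X.y (k s) + z s) (l : List α) :
    ∀ (x : List (Fin d)), 2 * d + 8 ≤ x.length + l.length →
    X.W x * (l.map g).prod = 0 := by
  induction l with
  | nil => intro x h; simpa using X.Z0 x (by simpa using h)
  | cons s l ih =>
    intro x h
    have h1 := ih (x ++ [k s]) (by simp at h ⊢; omega)
    have h2 := X.G1 g k z hz hg (hz s) l x [] (by simp at h ⊢; omega)
    simp only [W_append, W_cons, W_nil, List.map_cons, List.prod_cons, hg s] at h1 h2 ⊢
    linear_combination (norm := noncomm_ring) h1 + h2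

end Sys

theorem wordOf_append (F : Type) [Field F] (d : ℕ) (l m : List (Ltr d)) :
    wordOf F d (l ++ m) = wordOf F d l * wordOf F d m := by simp [wordOf]

theorem tp_add (F : Type) [Field F] (d : ℕ) (a b : FA F d) : tp F d (a + b) = tp F d a + tp F d b := by
  simp [tp]
theorem tp_neg (F : Type) [Field F] (d : ℕ) (a : FA F d) : tp F d (-a) = - tp F d a := by
  simp [tp]
theorem tp_mul (F : Type) [Field F] (d : ℕ) (a b : FA F d) : tp F d (a * b) = tp F d b * tp F d a := by
  simp [tp]
theorem tp_smul (F : Type) [Field F] (d : ℕ) (r : F) (a : FA F d) : tp F d (r • a) = r • tp F d a := by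
  simp [tp]
theorem tp_ι (F : Type) [Field F] (d : ℕ) (s : Ltr d) :
    tp F d (FreeAlgebra.ι F s) = FreeAlgebra.ι F (s.1, !s.2) := by
  simp [tp]
theorem tp_one (F : Type) [Field F] (d : ℕ) : tp F d 1 = 1 := by
  simp [tp]

theorem tp_wordOf (F : Type) [Field F] (d : ℕ) (l : List (Ltr d)) :
    tp F d (wordOf F d l) = wordOf F d (l.map fun s => (s.1, !s.2)).reverse := by
  induction l with
  | nil => simp [wordOf, tp_one]
  | cons s l ih =>
    have : wordOf F d (s :: l) = FreeAlgebra.ι F s * wordOf F d l := by simp [wordOf]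
    rw [this, tp_mul, ih, tp_ι, List.map_cons, List.reverse_cons, wordOf_append]
    simp [wordOf]

theorem tp_tp (F : Type) [Field F] (d : ℕ) (a : FA F d) : tp F d (tp F d a) = a := by
  induction a using FreeAlgebra.induction with
  | grade0 r => rw [Algebra.algebraMap_eq_smul_one, tp_smul, tp_one, tp_smul, tp_one]
  | grade1 s => rw [tp_ι, tp_ι]; simp
  | mul a b ha hb => rw [tp_mul, tp_mul, ha, hb]
  | add a b ha hb => rw [tp_add, tp_add, ha, hb]

theorem MF_word (F : Type) [Field F] (d : ℕ) (l : List (Ltr d)) (h : l ≠ []) :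
    wordOf F d l ∈ MFsub F d := Submodule.subset_span ⟨l, h, rfl⟩

theorem MF_ι (F : Type) [Field F] (d : ℕ) (s : Ltr d) : FreeAlgebra.ι F s ∈ MFsub F d := by
  have := MF_word F d [s] (by simp)
  simpa [wordOf] using this

theorem MF_tp (F : Type) [Field F] (d : ℕ) (a : FA F d) (ha : a ∈ MFsub F d) : tp F d a ∈ MFsub F d := by
  unfold MFsub at ha
  induction ha using Submodule.span_induction with
  | mem x h =>
    obtain ⟨l, hl, rfl⟩ := h
    rw [tp_wordOf]
    exact MF_word F d _ (by simpa using hl)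
  | zero => simp [tp]
  | add a b _ _ ha hb => rw [tp_add]; exact Submodule.add_mem _ ha hb
  | smul r a _ ha => rw [tp_smul]; exact Submodule.smul_mem _ _ ha

theorem MF_mul (F : Type) [Field F] (d : ℕ) (a b : FA F d) (ha : a ∈ MFsub F d) (hb : b ∈ MFsub F d) :
    a * b ∈ MFsub F d := by
  have h := Submodule.mul_mem_mul ha hb
  refine (Submodule.mul_le.mpr ?_ : MFsub F d * MFsub F d ≤ MFsub F d) h
  intro a ha b hb
  have h := Submodule.mul_mem_mul ha hb
  unfold MFsub at h
  rw [Submodule.span_mul_span] at h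
  refine Submodule.span_le.mpr ?_ h
  rintro _ ⟨_, ⟨l, hl, rfl⟩, _, ⟨m, hm, rfl⟩, rfl⟩
  have := MF_word F d (l ++ m) (by simp [hl])
  rw [wordOf_append] at this
  exact this

theorem FA_three (F : Type) [Field F] [CharP F 3] (d : ℕ) : (3 : FA F d) = 0 := by
  have h : ((3 : ℕ) : F) = 0 := CharP.cast_eq_zero F 3
  have h2 := congrArg (algebraMap F (FA F d)) h
  rw [map_natCast, map_zero] at h2
  exact_mod_cast h2

theorem pi_zero (F : Type) [Field F] (d : ℕ) (a : FA F d) :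
    (idealA F d).ringCon.mk' a = 0 ↔ a ∈ idealA F d := by
  rw [← map_zero (idealA F d).ringCon.mk', TwoSidedIdeal.mem_iff]
  exact RingCon.eq _

def theSys (F : Type) [Field F] [CharP F 3] (d : ℕ) : Sys (idealA F d).ringCon.Quotient d where
  Rel a a' := ∃ x ∈ MFsub F d, (idealA F d).ringCon.mk' x = a ∧ (idealA F d).ringCon.mk' (tp F d x) = a'
  y i := (idealA F d).ringCon.mk' (-(FreeAlgebra.ι F (i, false) + FreeAlgebra.ι F (i, true)))
  h3 := by
    have := congrArg (idealA F d).ringCon.mk' (FA_three F d)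
    rw [map_zero, map_ofNat] at this
    exact this
  add := by
    rintro _ _ _ _ ⟨x, hx, rfl, rfl⟩ ⟨y, hy, rfl, rfl⟩
    exact ⟨x + y, Submodule.add_mem _ hx hy, by simp, by simp [tp_add]⟩
  neg := by
    rintro _ _ ⟨x, hx, rfl, rfl⟩
    exact ⟨-x, Submodule.neg_mem _ hx, by simp, by simp [tp_neg]⟩
  mul := by
    rintro _ _ _ _ ⟨x, hx, rfl, rfl⟩ ⟨y, hy, rfl, rfl⟩
    exact ⟨x * y, MF_mul F d _ _ hx hy, by simp, by simp [tp_mul]⟩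
  sym := by
    rintro _ _ ⟨x, hx, rfl, rfl⟩
    exact ⟨tp F d x, MF_tp F d _ hx, rfl, by rw [tp_tp]⟩
  hy i := by
    refine ⟨_, Submodule.neg_mem _ (Submodule.add_mem _ (MF_ι F d (i, false)) (MF_ι F d (i, true))), rfl, ?_⟩
    rw [tp_neg, tp_add, tp_ι, tp_ι]
    simp [add_comm]
  cube := by
    rintro _ _ ⟨x, hx, rfl, rfl⟩
    have : x ^ 3 ∈ idealA F d := TwoSidedIdeal.subset_span (Or.inl ⟨x, hx, rfl⟩)
    rw [← pi_zero, pow_succ, pow_two, map_mul, map_mul] at this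
    exact this
  T := by
    rintro _ _ _ _ ⟨x, hx, rfl, rfl⟩ ⟨y, hy, rfl, hy'⟩ ⟨z, hz, rfl, hz'⟩
    have h : Trel F d x y z ∈ idealA F d :=
      TwoSidedIdeal.subset_span (Or.inr ⟨x, hx, y, hy, z, hz, rfl⟩)
    have h3 := congrArg (idealA F d).ringCon.mk' (FA_three F d)
    rw [map_zero, map_ofNat] at h3
    rw [← pi_zero] at h
    simp only [Trel, bar, map_add, map_mul, map_sub, hy', hz'] at h
    generalize (idealA F d).ringCon.mk' x = a at *
    generalize (idealA F d).ringCon.mk' (tp F d x) = a' at *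
    generalize (idealA F d).ringCon.mk' y = b at *
    generalize (idealA F d).ringCon.mk' z = c at *
    linear_combination (norm := noncomm_ring) h - h3 * (a * b * c + b * a' * c + b * c * a)

/-- if `char F = 3`, then every word which is nonzero in `A_{3,d}` has length at
most `2d + 7`. -/
theorem stmt15 (F : Type) [Field F] [Infinite F] [CharP F 3] (d : ℕ)
    (l : List (Ltr d)) (hl : l ≠ []) (h : wordOf F d l ∉ idealA F d) :
    l.length ≤ 2 * d + 7 := by
  by_contra hcon
  apply h
  rw [← pi_zero, wordOf, map_list_prod, List.map_map]
  have h0 := (theSys F d).G0 ((idealA F d).ringCon.mk' ∘ FreeAlgebra.ι F) (fun s => s.1)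
    (fun s => (idealA F d).ringCon.mk' (-(FreeAlgebra.ι F s - FreeAlgebra.ι F (s.1, !s.2)))) ?_ ?_ l []
    (by simp; omega)
  · simpa using h0
  · intro s
    refine ⟨_, Submodule.neg_mem _ (Submodule.sub_mem _ (MF_ι F d s) (MF_ι F d (s.1, !s.2))), rfl, ?_⟩
    rw [sub_eq_add_neg, tp_neg, tp_add, tp_neg, tp_ι, tp_ι, ← map_neg]
    congr 1
    simp
  · rintro ⟨i, s⟩
    change (idealA F d).ringCon.mk' _ = (idealA F d).ringCon.mk' _ + (idealA F d).ringCon.mk' _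
    rw [← map_add]
    congr 1
    have h3 := FA_three F d
    cases s
    · linear_combination (norm := (simp; noncomm_ring)) h3 * FreeAlgebra.ι F ((i, false) : Ltr d)
    · linear_combination (norm := (simp; noncomm_ring)) h3 * FreeAlgebra.ι F ((i, true) : Ltr d)
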